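/- Assume in addition that H is superlinear, i.e. H(s)/s → ∞ as s → ∞. Then for every xⁿ ∈ Q there exists exactly one x⁺ ∈ Q that is a scheme update of xⁿ; i.e., the fully discrete convex-splitting scheme for the trajectory equation is uniquely solvable in the admissible set Q. (Theorem 4.1.) -/

import Mathlib

open Finset Filter

noncomputable section

/-- Forward difference onto cells: `(D_h l)_{i-1/2} = (l_i - l_{i-1})/h` (use index `i`, `1 ≤ i ≤ M`). -/
def DhOp (h : ℝ) (l : ℕ → ℝ) (i : ℕ) : ℝ := (l i - l (i - 1)) / h

/-- Difference of a cell function back onto nodes: `(d_h φ)_i = (φ_{i+1/2} - φ_{i-1/2})/h`;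
a cell function `φ` is encoded by `φ i = φ_{i-1/2}`. -/
def dhOp (h : ℝ) (φ : ℕ → ℝ) (i : ℕ) : ℝ := (φ (i + 1) - φ i) / h

/-- Central difference `D̃_h` on nodes. -/
def DtOp (M : ℕ) (h : ℝ) (l : ℕ → ℝ) (i : ℕ) : ℝ :=
  if i = 0 then (l 1 - l 0) / h
  else if i = M then (l M - l (M - 1)) / h
  else (l (i + 1) - l (i - 1)) / (2 * h)

/-- Node inner product `⟨l, g⟩_E`. -/
def ipE (M : ℕ) (h : ℝ) (l g : ℕ → ℝ) : ℝ :=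
  h * (l 0 * g 0 / 2 + (∑ i ∈ Finset.Ioo 0 M, l i * g i) + l M * g M / 2)

/-- Cell inner product `⟨φ, ψ⟩_C`. -/
def ipC (M : ℕ) (h : ℝ) (φ ψ : ℕ → ℝ) : ℝ :=
  h * ∑ i ∈ Finset.Icc 1 M, φ i * ψ i

/-- The admissible (ordered) set `Q`. -/
def inQ (M : ℕ) (X0 XM : ℝ) (l : ℕ → ℝ) : Prop :=
  l 0 = X0 ∧ l M = XM ∧ ∀ i, 1 ≤ i → i ≤ M → l (i - 1) < l i

/-- The closure `Q̄` of the admissible set. -/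
def inQbar (M : ℕ) (X0 XM : ℝ) (l : ℕ → ℝ) : Prop :=
  l 0 = X0 ∧ l M = XM ∧ ∀ i, 1 ≤ i → i ≤ M → l (i - 1) ≤ l i

/-- `Ŝ[x]_i = ⟨K(x_i - y), u₀(Y)⟩_E` for a kernel `K` (e.g. `K = W_c'`);
also used as `w[x]_i` when `K = W` itself. -/
def Shat (M : ℕ) (h : ℝ) (K : ℝ → ℝ) (u0 x : ℕ → ℝ) (i : ℕ) : ℝ :=
  ipE M h (fun j => K (x i - x j)) u0

/-- The cell function `G[x]_{i-1/2} = s·H'(s) - H(s)`, `s = u_{0,i-1/2}/(D_h x)_{i-1/2}`. -/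
def Gcell (h : ℝ) (H : ℝ → ℝ) (u0half x : ℕ → ℝ) (i : ℕ) : ℝ :=
  u0half i / DhOp h x i * deriv H (u0half i / DhOp h x i) - H (u0half i / DhOp h x i)

/-- The mobility coefficient `c[x]_i = u_{0,i}² / ((D̃_h x)_i · f(u_{0,i}/(D̃_h x)_i))`. -/
def cCoef (M : ℕ) (h : ℝ) (f : ℝ → ℝ) (u0 x : ℕ → ℝ) (i : ℕ) : ℝ :=
  u0 i ^ 2 / (DtOp M h x i * f (u0 i / DtOp M h x i))

/-- `xp` is a scheme update of `x`: the fully discrete convex-splitting scheme equations. -/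
def SchemeUpdate (M : ℕ) (h τ : ℝ) (H f Vc Ve Wc We : ℝ → ℝ)
    (u0 u0half x xp : ℕ → ℝ) : Prop :=
  ∀ i, 1 ≤ i → i ≤ M - 1 →
    cCoef M h f u0 x i * (xp i - x i) / τ =
      -dhOp h (Gcell h H u0half xp) i - u0 i * deriv Vc (xp i)
        + u0 i * deriv Ve (x i)
        - u0 i * Shat M h (deriv Wc) u0 xp i + u0 i * Shat M h (deriv We) u0 x i

/-- The discrete total energy `E_N`. -/
def EN (M : ℕ) (h : ℝ) (H V W : ℝ → ℝ) (u0 u0half x : ℕ → ℝ) : ℝ :=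
  h * ∑ i ∈ Finset.Icc 1 M, H (u0half i / DhOp h x i) * DhOp h x i
    + ipE M h u0 (fun i => V (x i))
    + 1 / 2 * ipE M h u0 (fun i => Shat M h W u0 x i)

/-- The convex part `E_{N,c}` of the discrete total energy. -/
def ENc (M : ℕ) (h : ℝ) (H Vc Wc : ℝ → ℝ) (u0 u0half x : ℕ → ℝ) : ℝ :=
  h * ∑ i ∈ Finset.Icc 1 M, H (u0half i / DhOp h x i) * DhOp h x i
    + ipE M h u0 (fun i => Vc (x i))
    + 1 / 2 * ipE M h u0 (fun i => Shat M h Wc u0 x i)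

/-- The concave (subtracted convex) part `E_{N,e}` of the discrete total energy. -/
def ENe (M : ℕ) (h : ℝ) (Ve We : ℝ → ℝ) (u0 x : ℕ → ℝ) : ℝ :=
  ipE M h u0 (fun i => Ve (x i)) + 1 / 2 * ipE M h u0 (fun i => Shat M h We u0 x i)

/-- The convex functional `J` whose minimizer over `Q` is the scheme update of `xn`. -/
def Jfun (M : ℕ) (h τ : ℝ) (H f Vc Ve Wc We : ℝ → ℝ)
    (u0 u0half xn z : ℕ → ℝ) : ℝ :=
  1 / (2 * τ) * ipE M h (fun i => cCoef M h f u0 xn i * (z i - xn i)) (fun i => z i - xn i)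
    + h * ∑ i ∈ Finset.Icc 1 M, H (u0half i / DhOp h z i) * DhOp h z i
    + ipE M h u0 (fun i => Vc (z i))
    + 1 / 2 * ipE M h u0 (fun i => Shat M h Wc u0 z i)
    - ipE M h (fun i => u0 i * deriv Ve (xn i)) z
    - ipE M h (fun i => u0 i * Shat M h (deriv We) u0 xn i) z

/-!
Multiplied by `h`, the scheme equations say that `x⁺` is an equilibrium of a chain of particles
`X₀ = z₀ < ⋯ < z_M = X_M` with node potentials `V_i` (the movement cost, `V_c`, and the linearised
explicit terms), pair interaction `W_c`, and spring potentials `Φ_k(d) = d H(u₀ h / d)` in the gaps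
`d = z_k - z_{k-1}`. Superlinearity of `H` makes `Φ_k` blow up at `0⁺`, so the gaps are bounded
below on sublevel sets of the energy; the energy therefore has a minimizer over `Q`, which is an
equilibrium because the ordering constraints are inactive there. Uniqueness is a discrete maximum
principle: at a node where `x - y > 0` is maximal, every contribution to the energy gradient is at
least as large at `x` as at `y`, and the one from the movement cost is strictly larger.
-/

section Perspective

variable {H : ℝ → ℝ} {a d : ℝ}

/-- The perspective `d ↦ d H(a / d)` of `H`: the energy of a mass `a` spread uniformly over a cell
of width `d`, when `H` is the energy density. -/
def perspective (H : ℝ → ℝ) (a d : ℝ) : ℝ := d * H (a / d)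

lemma convexOn_perspective (hH : ConvexOn ℝ (Set.Ioi 0) H) (ha : 0 < a) :
    ConvexOn ℝ (Set.Ioi 0) (perspective H a) := by
  refine ⟨convex_Ioi 0, fun x (hx : 0 < x) y (hy : 0 < y) α β hα hβ hαβ => ?_⟩
  have hz : 0 < α * x + β * y := (convex_Ioi (0 : ℝ)) hx hy hα hβ hαβ
  have hsum : α * x / (α * x + β * y) + β * y / (α * x + β * y) = 1 := by
    rw [← add_div, div_self hz.ne']
  have hbary : α * x / (α * x + β * y) * (a / x) + β * y / (α * x + β * y) * (a / y) =
      a / (α * x + β * y) := by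
    field_simp
    exact hαβ
  have hjensen := hH.2 (div_pos ha hx) (div_pos ha hy) (by positivity) (by positivity) hsum
  simp only [smul_eq_mul, hbary] at hjensen
  simp only [perspective, smul_eq_mul]
  calc (α * x + β * y) * H (a / (α * x + β * y))
      ≤ (α * x + β * y) * (α * x / (α * x + β * y) * H (a / x) +
          β * y / (α * x + β * y) * H (a / y)) := by gcongr
    _ = α * (x * H (a / x)) + β * (y * H (a / y)) := by field_simp

lemma hasDerivAt_perspective (hH : DifferentiableAt ℝ H (a / d)) (hd : d ≠ 0) :
    HasDerivAt (perspective H a) (H (a / d) - a / d * deriv H (a / d)) d := by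
  have hdiv : HasDerivAt (fun d : ℝ => a / d) (-a / d ^ 2) d := by
    simpa using (hasDerivAt_const d a).fun_div (hasDerivAt_id' d) hd
  refine ((hasDerivAt_id' d).mul (hH.hasDerivAt.comp d hdiv)).congr_deriv ?_
  simp only [Function.comp_apply]
  field_simp
  ring

lemma differentiableOn_perspective (hH : DifferentiableOn ℝ H (Set.Ioi 0)) (ha : 0 < a) :
    DifferentiableOn ℝ (perspective H a) (Set.Ioi 0) := fun _ (hd : 0 < _) =>
  (hasDerivAt_perspective (hH.differentiableAt (Ioi_mem_nhds (div_pos ha hd)))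
    hd.ne').differentiableAt.differentiableWithinAt

lemma tendsto_perspective_nhdsGT_zero (hH : Tendsto (fun s => H s / s) atTop atTop)
    (ha : 0 < a) : Tendsto (perspective H a) (nhdsWithin 0 (Set.Ioi 0)) atTop := by
  have hdiv : Tendsto (fun d : ℝ => a / d) (nhdsWithin 0 (Set.Ioi 0)) atTop := by
    simpa only [div_eq_mul_inv] using tendsto_inv_nhdsGT_zero.const_mul_atTop ha
  refine ((hH.comp hdiv).const_mul_atTop ha).congr' ?_
  filter_upwards [self_mem_nhdsWithin] with d (hd : 0 < d)
  simp only [Function.comp_apply, perspective]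
  field_simp

end Perspective

section Barrier

lemma exists_forall_le_of_tendsto_nhdsGT_zero {Φ : ℝ → ℝ} (hΦ : ContinuousOn Φ (Set.Ioi 0))
    (hlim : Tendsto Φ (nhdsWithin 0 (Set.Ioi 0)) atTop) (L : ℝ) :
    ∃ c, ∀ d ∈ Set.Ioc 0 L, c ≤ Φ d := by
  obtain ⟨ε, hε, hnear⟩ :=
    mem_nhdsGT_iff_exists_Ioo_subset.1 (hlim.eventually_ge_atTop 0)
  obtain ⟨c, hc⟩ := (isCompact_Icc (a := ε) (b := L)).bddBelow_image
    (hΦ.mono fun d hd => lt_of_lt_of_le hε hd.1)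
  refine ⟨min 0 c, fun d hd => ?_⟩
  rcases lt_or_ge d ε with hdε | hεd
  · exact (min_le_left _ _).trans (hnear ⟨hd.1, hdε⟩)
  · exact (min_le_right _ _).trans (hc (Set.mem_image_of_mem Φ ⟨hεd, hd.2⟩))

lemma exists_pos_forall_le_of_sum_le {ι : Type*} (s : Finset ι) {Φ : ι → ℝ → ℝ}
    (hΦ : ∀ k ∈ s, ContinuousOn (Φ k) (Set.Ioi 0))
    (hlim : ∀ k ∈ s, Tendsto (Φ k) (nhdsWithin 0 (Set.Ioi 0)) atTop) (L C : ℝ) :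
    ∃ δ > 0, ∀ d : ι → ℝ, (∀ k ∈ s, d k ∈ Set.Ioc 0 L) → ∑ k ∈ s, Φ k (d k) ≤ C →
      ∀ k ∈ s, δ ≤ d k := by
  classical
  choose! c hc using fun k hk => exists_forall_le_of_tendsto_nhdsGT_zero (hΦ k hk) (hlim k hk) L
  obtain ⟨δ, hδ, hnear⟩ := mem_nhdsGT_iff_exists_Ioo_subset.1 ((s.eventually_all).2 fun k hk =>
    (hlim k hk).eventually_gt_atTop (C - ∑ j ∈ s.erase k, c j))
  refine ⟨δ, hδ, fun d hd hsum k hk => ?_⟩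
  by_contra! hlt
  have hlarge : C - ∑ j ∈ s.erase k, c j < Φ k (d k) := hnear ⟨(hd k hk).1, hlt⟩ k hk
  have hrest : ∑ j ∈ s.erase k, c j ≤ ∑ j ∈ s.erase k, Φ j (d j) :=
    sum_le_sum fun j hj => hc j (mem_of_mem_erase hj) _ (hd j (mem_of_mem_erase hj))
  linarith [add_sum_erase s (fun j => Φ j (d j)) hk]

end Barrier

section Admissible

variable {M : ℕ} {X0 XM : ℝ} {l : ℕ → ℝ}

lemma inQ.lt_succ (hl : inQ M X0 XM l) {i : ℕ} (hi : i < M) : l i < l (i + 1) :=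
  hl.2.2 (i + 1) (by omega) hi

lemma inQ.monotoneOn (hl : inQ M X0 XM l) : MonotoneOn l (Set.Iic M) :=
  monotoneOn_of_le_succ Set.ordConnected_Iic fun _ _ _ hi => (hl.lt_succ hi).le

lemma inQ.mem_Icc (hl : inQ M X0 XM l) {i : ℕ} (hi : i ≤ M) : l i ∈ Set.Icc X0 XM := by
  have hlo := hl.monotoneOn (Nat.zero_le M) hi (Nat.zero_le i)
  have hhi := hl.monotoneOn hi (le_refl M) hi
  rw [hl.1] at hlo
  rw [hl.2.1] at hhi
  exact ⟨hlo, hhi⟩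

lemma inQ.sub_mem_Ioc (hl : inQ M X0 XM l) {k : ℕ} (hk : k ∈ Icc 1 M) :
    l k - l (k - 1) ∈ Set.Ioc 0 (XM - X0) := by
  obtain ⟨h1, hM⟩ := Finset.mem_Icc.1 hk
  have hlt := hl.2.2 k h1 hM
  have hhi := (hl.mem_Icc hM).2
  have hlo := (hl.mem_Icc (show k - 1 ≤ M by omega)).1
  exact ⟨by linarith, by linarith⟩

lemma inQ.comp_min (hl : inQ M X0 XM l) : inQ M X0 XM fun j => l (min j M) := by
  refine ⟨by simpa using hl.1, by simpa using hl.2.1, fun i h1 hM => ?_⟩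
  simpa [hM, (Nat.sub_le i 1).trans hM] using hl.2.2 i h1 hM

lemma inQ.eventually_update (hl : inQ M X0 XM l) {i : ℕ} (hi0 : 0 < i) (hiM : i < M) :
    ∀ᶠ t in nhds (l i), inQ M X0 XM (Function.update l i t) := by
  have hcont : Continuous (Function.update l i) := continuous_const.update i continuous_id
  have hlt : ∀ᶠ t in nhds (l i), ∀ k ∈ Icc 1 M,
      Function.update l i t (k - 1) < Function.update l i t k := by
    refine (Finset.eventually_all _).2 fun k hk => ?_
    apply ((continuous_apply (k - 1)).comp hcont).continuousAt.eventually_lt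
      ((continuous_apply k).comp hcont).continuousAt
    simpa using hl.2.2 k (Finset.mem_Icc.1 hk).1 (Finset.mem_Icc.1 hk).2
  filter_upwards [hlt] with t ht
  refine ⟨?_, ?_, fun k h1 hM => ht k (Finset.mem_Icc.2 ⟨h1, hM⟩)⟩
  · rw [Function.update_of_ne hi0.ne, hl.1]
  · rw [Function.update_of_ne hiM.ne', hl.2.1]

lemma isCompact_setOf_gap_ge (M : ℕ) (X0 XM δ : ℝ) :
    IsCompact {l : ℕ → ℝ | (∀ j, l j ∈ Set.Icc X0 XM) ∧ l 0 = X0 ∧ l M = XM ∧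
      ∀ k ∈ Icc 1 M, δ ≤ l k - l (k - 1)} := by
  have hbox : IsCompact {l : ℕ → ℝ | ∀ j, l j ∈ Set.Icc X0 XM} :=
    isCompact_pi_infinite fun _ => isCompact_Icc
  have hgap : IsClosed {l : ℕ → ℝ | ∀ k ∈ Icc 1 M, δ ≤ l k - l (k - 1)} := by
    simp only [Set.ofPred_forall]
    exact isClosed_biInter fun k _ => isClosed_le (by fun_prop) (by fun_prop)
  exact hbox.inter_right ((isClosed_eq (by fun_prop) (by fun_prop)).inter
    ((isClosed_eq (by fun_prop) (by fun_prop)).inter hgap))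

lemma dependsOn_sum_gap (M : ℕ) (Φ : ℕ → ℝ → ℝ) :
    DependsOn (fun y : ℕ → ℝ => ∑ k ∈ Icc 1 M, Φ k (y k - y (k - 1))) (Set.Iic M) := by
  refine fun x y hxy => sum_congr rfl fun k hk => ?_
  have hk := (Finset.mem_Icc.1 hk).2
  rw [hxy k hk, hxy (k - 1) ((Nat.sub_le k 1).trans hk)]

variable {R : (ℕ → ℝ) → ℝ} {Φ : ℕ → ℝ → ℝ}

lemma exists_pos_forall_le_gap (hR : Continuous R) (hRM : DependsOn R (Set.Iic M))
    (hΦ : ∀ k ∈ Icc 1 M, ContinuousOn (Φ k) (Set.Ioi 0))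
    (hlim : ∀ k ∈ Icc 1 M, Tendsto (Φ k) (nhdsWithin 0 (Set.Ioi 0)) atTop) (X0 XM C : ℝ) :
    ∃ δ > 0, ∀ y, inQ M X0 XM y → R y + ∑ k ∈ Icc 1 M, Φ k (y k - y (k - 1)) ≤ C →
      ∀ k ∈ Icc 1 M, δ ≤ y k - y (k - 1) := by
  have hbox : IsCompact {y : ℕ → ℝ | ∀ j, y j ∈ Set.Icc X0 XM} :=
    isCompact_pi_infinite fun _ => isCompact_Icc
  obtain ⟨r, hr⟩ := hbox.bddBelow_image hR.continuousOn
  obtain ⟨δ, hδ, hgap⟩ := exists_pos_forall_le_of_sum_le (Icc 1 M) hΦ hlim (XM - X0) (C - r)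
  refine ⟨δ, hδ, fun y hy hle => hgap _ (fun k hk => hy.sub_mem_Ioc hk) ?_⟩
  have hcut : (R fun j => y (min j M)) = R y := hRM fun i hi => by rw [min_eq_left hi]
  have hRr : r ≤ R fun j => y (min j M) :=
    hr (Set.mem_image_of_mem R fun j => hy.mem_Icc (min_le_right j M))
  linarith

lemma exists_isMinOn_add_sum_gap (hR : Continuous R) (hRM : DependsOn R (Set.Iic M))
    (hΦ : ∀ k ∈ Icc 1 M, ContinuousOn (Φ k) (Set.Ioi 0))
    (hlim : ∀ k ∈ Icc 1 M, Tendsto (Φ k) (nhdsWithin 0 (Set.Ioi 0)) atTop)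
    (hl : inQ M X0 XM l) :
    ∃ z, inQ M X0 XM z ∧
      IsMinOn (fun y => R y + ∑ k ∈ Icc 1 M, Φ k (y k - y (k - 1))) {y | inQ M X0 XM y} z := by
  set E : (ℕ → ℝ) → ℝ := fun y => R y + ∑ k ∈ Icc 1 M, Φ k (y k - y (k - 1))
  have hcut (y : ℕ → ℝ) : E (fun j => y (min j M)) = E y := by
    have heq : ∀ i ≤ M, y (min i M) = y i := fun i hi => by rw [min_eq_left hi]
    exact congrArg₂ (· + ·) (hRM heq) (dependsOn_sum_gap M Φ heq)
  obtain ⟨δ, hδ, hgap⟩ := exists_pos_forall_le_gap hR hRM hΦ hlim X0 XM (E l)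
  set K := {y : ℕ → ℝ | (∀ j, y j ∈ Set.Icc X0 XM) ∧ y 0 = X0 ∧ y M = XM ∧
    ∀ k ∈ Icc 1 M, δ ≤ y k - y (k - 1)}
  -- Freezing the entries beyond `M` moves every competitor of `l` into the compact set `K`.
  have hKmem (y : ℕ → ℝ) (hy : inQ M X0 XM y) (hle : E y ≤ E l) : (fun j => y (min j M)) ∈ K :=
    ⟨fun j => hy.mem_Icc (min_le_right j M), hy.comp_min.1, hy.comp_min.2.1,
      hgap _ hy.comp_min ((hcut y).trans_le hle)⟩
  have hEK : ContinuousOn E K :=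
    hR.continuousOn.add (continuousOn_finsetSum _ fun k hk =>
      (hΦ k hk).comp (by fun_prop) fun y hy => hδ.trans_le (hy.2.2.2 k hk))
  obtain ⟨z, hz, hmin⟩ :=
    (isCompact_setOf_gap_ge M X0 XM δ).exists_isMinOn ⟨_, hKmem l hl le_rfl⟩ hEK
  have hzle (y : ℕ → ℝ) (hy : inQ M X0 XM y) (hle : E y ≤ E l) : E z ≤ E y :=
    (hmin (hKmem y hy hle)).trans_eq (hcut y)
  refine ⟨z, ⟨hz.2.1, hz.2.2.1, fun k h1 hM => ?_⟩, fun y hy => ?_⟩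
  · exact sub_pos.1 (hδ.trans_le (hz.2.2.2 k (Finset.mem_Icc.2 ⟨h1, hM⟩)))
  · rcases le_total (E y) (E l) with hle | hge
    · exact hzle y hy hle
    · exact (hzle l hl le_rfl).trans hge

end Admissible

section Chain

variable {M : ℕ} {m : ℕ → ℝ} {V Φ : ℕ → ℝ → ℝ} {W : ℝ → ℝ} {X0 XM : ℝ} {z : ℕ → ℝ}

/-- Energy of a chain of particles at positions `z 0, …, z M`: node potentials `V i`, pair
interaction `W` weighted by the masses `m`, and a spring potential `Φ k` in the gap between `k - 1`
and `k`. -/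
def chainEnergy (M : ℕ) (m : ℕ → ℝ) (V : ℕ → ℝ → ℝ) (W : ℝ → ℝ) (Φ : ℕ → ℝ → ℝ)
    (z : ℕ → ℝ) : ℝ :=
  ∑ i ∈ range (M + 1), V i (z i)
    + 1 / 2 * ∑ i ∈ range (M + 1), ∑ j ∈ range (M + 1), m i * m j * W (z i - z j)
    + ∑ k ∈ Icc 1 M, Φ k (z k - z (k - 1))

/-- The partial derivative of `chainEnergy` in the position of an interior particle
`0 < i < M`, for an even interaction `W`. -/
def chainGradient (M : ℕ) (m : ℕ → ℝ) (V : ℕ → ℝ → ℝ) (W : ℝ → ℝ) (Φ : ℕ → ℝ → ℝ)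
    (z : ℕ → ℝ) (i : ℕ) : ℝ :=
  deriv (V i) (z i) + m i * ∑ j ∈ range (M + 1), m j * deriv W (z i - z j)
    + (deriv (Φ i) (z i - z (i - 1)) - deriv (Φ (i + 1)) (z (i + 1) - z i))

lemma hasDerivAt_update_apply (z : ℕ → ℝ) (i j : ℕ) (t : ℝ) :
    HasDerivAt (fun s => Function.update z i s j) ((Pi.single i 1 : ℕ → ℝ) j) t :=
  hasDerivAt_pi.1 (hasDerivAt_update z i t) j

lemma deriv_neg_of_even (hW : ∀ s, W (-s) = W s) (t : ℝ) : deriv W (-t) = -deriv W t := by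
  have hderiv := deriv_comp_neg W t
  rw [funext hW] at hderiv
  rw [hderiv, neg_neg]

lemma sum_mul_piSingle (s : Finset ℕ) (A : ℕ → ℝ) {i : ℕ} (hi : i ∈ s) :
    ∑ j ∈ s, A j * (Pi.single i 1 : ℕ → ℝ) j = A i := by
  simp [Pi.single_apply, hi]

lemma sum_sum_mul_sub_of_antisymm {ι : Type*} (s : Finset ι) {A : ι → ι → ℝ}
    (hA : ∀ j k, A k j = -A j k) (e : ι → ℝ) :
    ∑ j ∈ s, ∑ k ∈ s, A j k * (e j - e k) = 2 * ∑ j ∈ s, (∑ k ∈ s, A j k) * e j := by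
  have hswap : ∑ j ∈ s, ∑ k ∈ s, A j k * e k = -∑ j ∈ s, ∑ k ∈ s, A j k * e j := by
    rw [sum_comm]
    simp only [← sum_neg_distrib]
    exact sum_congr rfl fun j _ => sum_congr rfl fun k _ => by rw [hA j k]; ring
  simp only [mul_sub, sum_sub_distrib, hswap, sum_mul]
  ring

lemma hasDerivAt_sum_node_update (s : Finset ℕ) {i : ℕ} (hi : i ∈ s)
    (hV : ∀ j ∈ s, DifferentiableAt ℝ (V j) (z j)) :
    HasDerivAt (fun t => ∑ j ∈ s, V j (Function.update z i t j)) (deriv (V i) (z i)) (z i) := by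
  rw [← sum_mul_piSingle s (fun j => deriv (V j) (z j)) hi]
  refine HasDerivAt.fun_sum fun j hj => ?_
  refine HasDerivAt.comp (h₂ := V j) (z i) ?_ (hasDerivAt_update_apply z i j (z i))
  rw [Function.update_eq_self]
  exact (hV j hj).hasDerivAt

lemma hasDerivAt_sum_pair_update (s : Finset ℕ) {i : ℕ} (hi : i ∈ s) (hW : Differentiable ℝ W)
    (heven : ∀ t, W (-t) = W t) :
    HasDerivAt (fun t => 1 / 2 * ∑ j ∈ s, ∑ k ∈ s,
        m j * m k * W (Function.update z i t j - Function.update z i t k))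
      (m i * ∑ j ∈ s, m j * deriv W (z i - z j)) (z i) := by
  have hpair (j k : ℕ) : HasDerivAt
      (fun t => m j * m k * W (Function.update z i t j - Function.update z i t k))
      (m j * m k * deriv W (z j - z k) *
        ((Pi.single i 1 : ℕ → ℝ) j - (Pi.single i 1 : ℕ → ℝ) k)) (z i) := by
    rw [mul_assoc]
    refine (HasDerivAt.comp (h₂ := W) (z i) ?_ ((hasDerivAt_update_apply z i j (z i)).fun_sub
      (hasDerivAt_update_apply z i k (z i)))).const_mul _
    rw [Function.update_eq_self]
    exact (hW _).hasDerivAt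
  refine ((HasDerivAt.fun_sum fun j _ => HasDerivAt.fun_sum fun k _ => hpair j k).const_mul
    (1 / 2 : ℝ)).congr_deriv ?_
  rw [sum_sum_mul_sub_of_antisymm s fun j k => by
    rw [← neg_sub (z j) (z k), deriv_neg_of_even heven]; ring]
  rw [sum_mul_piSingle s _ hi]
  simp only [mul_sum]
  exact sum_congr rfl fun k _ => by ring

lemma hasDerivAt_sum_gap_update {i : ℕ} (hi0 : 0 < i) (hiM : i < M)
    (hΦ : ∀ k ∈ Icc 1 M, DifferentiableAt ℝ (Φ k) (z k - z (k - 1))) :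
    HasDerivAt (fun t => ∑ k ∈ Icc 1 M,
        Φ k (Function.update z i t k - Function.update z i t (k - 1)))
      (deriv (Φ i) (z i - z (i - 1)) - deriv (Φ (i + 1)) (z (i + 1) - z i)) (z i) := by
  have hgap : ∀ k ∈ Icc 1 M, HasDerivAt
      (fun t => Φ k (Function.update z i t k - Function.update z i t (k - 1)))
      (deriv (Φ k) (z k - z (k - 1)) *
        ((Pi.single i 1 : ℕ → ℝ) k - (Pi.single i 1 : ℕ → ℝ) (k - 1))) (z i) := by
    intro k hk
    refine HasDerivAt.comp (h₂ := Φ k) (z i) ?_ ((hasDerivAt_update_apply z i k (z i)).fun_sub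
      (hasDerivAt_update_apply z i (k - 1) (z i)))
    rw [Function.update_eq_self]
    exact (hΦ k hk).hasDerivAt
  refine (HasDerivAt.fun_sum hgap).congr_deriv ?_
  simp only [mul_sub, sum_sub_distrib]
  congr 1
  · exact sum_mul_piSingle _ (fun k => deriv (Φ k) (z k - z (k - 1)))
      (Finset.mem_Icc.2 ⟨hi0, hiM.le⟩)
  · rw [sum_eq_single_of_mem (i + 1) (Finset.mem_Icc.2 ⟨by omega, hiM⟩)]
    · simp
    · intro k hk hne
      have h1 := (Finset.mem_Icc.1 hk).1
      rw [Pi.single_eq_of_ne (by omega), mul_zero]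

lemma hasDerivAt_chainEnergy_update (hV : ∀ i ≤ M, Differentiable ℝ (V i))
    (hW : Differentiable ℝ W) (heven : ∀ t, W (-t) = W t)
    (hΦ : ∀ k ∈ Icc 1 M, DifferentiableOn ℝ (Φ k) (Set.Ioi 0)) (hz : inQ M X0 XM z) {i : ℕ}
    (hi0 : 0 < i) (hiM : i < M) :
    HasDerivAt (fun t => chainEnergy M m V W Φ (Function.update z i t))
      (chainGradient M m V W Φ z i) (z i) := by
  have hi : i ∈ range (M + 1) := mem_range.2 (by omega)
  exact ((hasDerivAt_sum_node_update _ hi fun j hj =>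
      hV j (Nat.lt_succ_iff.1 (mem_range.1 hj)) _).fun_add
    (hasDerivAt_sum_pair_update _ hi hW heven)).fun_add
    (hasDerivAt_sum_gap_update hi0 hiM fun k hk =>
      (hΦ k hk).differentiableAt (Ioi_mem_nhds (hz.sub_mem_Ioc hk).1))

lemma chainGradient_eq_zero_of_isMinOn (hV : ∀ i ≤ M, Differentiable ℝ (V i))
    (hW : Differentiable ℝ W) (heven : ∀ t, W (-t) = W t)
    (hΦ : ∀ k ∈ Icc 1 M, DifferentiableOn ℝ (Φ k) (Set.Ioi 0)) (hz : inQ M X0 XM z)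
    (hmin : IsMinOn (chainEnergy M m V W Φ) {y | inQ M X0 XM y} z) {i : ℕ}
    (hi0 : 0 < i) (hiM : i < M) : chainGradient M m V W Φ z i = 0 := by
  refine IsLocalMin.hasDerivAt_eq_zero ?_
    (hasDerivAt_chainEnergy_update hV hW heven hΦ hz hi0 hiM)
  filter_upwards [hz.eventually_update hi0 hiM] with t ht
  rw [Function.update_eq_self]
  exact hmin ht

lemma exists_isMinOn_chainEnergy (hV : ∀ i ≤ M, Continuous (V i)) (hW : Continuous W)
    (hΦ : ∀ k ∈ Icc 1 M, ContinuousOn (Φ k) (Set.Ioi 0))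
    (hlim : ∀ k ∈ Icc 1 M, Tendsto (Φ k) (nhdsWithin 0 (Set.Ioi 0)) atTop)
    (hz : inQ M X0 XM z) :
    ∃ y, inQ M X0 XM y ∧ IsMinOn (chainEnergy M m V W Φ) {y | inQ M X0 XM y} y := by
  refine exists_isMinOn_add_sum_gap (R := fun z => ∑ i ∈ range (M + 1), V i (z i)
    + 1 / 2 * ∑ i ∈ range (M + 1), ∑ j ∈ range (M + 1), m i * m j * W (z i - z j))
    ?_ ?_ hΦ hlim hz
  · refine (continuous_finsetSum _ fun i hi => ?_).add (by fun_prop)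
    exact (hV i (Nat.lt_succ_iff.1 (mem_range.1 hi))).comp (continuous_apply i)
  · intro x y hxy
    replace hxy : ∀ i ∈ range (M + 1), x i = y i := fun i hi =>
      hxy i (Nat.lt_succ_iff.1 (mem_range.1 hi))
    refine congrArg₂ (fun a b => a + 1 / 2 * b) (sum_congr rfl fun i hi => by rw [hxy i hi])
      (sum_congr rfl fun i hi => sum_congr rfl fun j hj => by rw [hxy i hi, hxy j hj])

lemma exists_inQ_chainGradient_eq_zero (hV : ∀ i ≤ M, Differentiable ℝ (V i))
    (hW : Differentiable ℝ W) (heven : ∀ t, W (-t) = W t)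
    (hΦ : ∀ k ∈ Icc 1 M, DifferentiableOn ℝ (Φ k) (Set.Ioi 0))
    (hlim : ∀ k ∈ Icc 1 M, Tendsto (Φ k) (nhdsWithin 0 (Set.Ioi 0)) atTop)
    (hz : inQ M X0 XM z) :
    ∃ y, inQ M X0 XM y ∧ ∀ i, 0 < i → i < M → chainGradient M m V W Φ y i = 0 := by
  obtain ⟨y, hy, hmin⟩ := exists_isMinOn_chainEnergy (m := m) (fun i hi => (hV i hi).continuous)
    hW.continuous (fun k hk => (hΦ k hk).continuousOn) hlim hz
  exact ⟨y, hy, fun i hi0 hiM => chainGradient_eq_zero_of_isMinOn hV hW heven hΦ hy hmin hi0 hiM⟩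

lemma chainGradient_lt_of_forall_sub_le {Y0 YM : ℝ} {x y : ℕ → ℝ} (hm : ∀ j ≤ M, 0 ≤ m j)
    {i : ℕ} (hi0 : 0 < i) (hiM : i < M) (hV : StrictMono (deriv (V i)))
    (hW : Monotone (deriv W)) (hΦ : ∀ k ∈ Icc 1 M, MonotoneOn (deriv (Φ k)) (Set.Ioi 0))
    (hx : inQ M X0 XM x) (hy : inQ M Y0 YM y) (hpos : y i < x i)
    (hmax : ∀ j ≤ M, x j - y j ≤ x i - y i) :
    chainGradient M m V W Φ y i < chainGradient M m V W Φ x i := by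
  have hi : i ∈ Icc 1 M := Finset.mem_Icc.2 ⟨hi0, hiM.le⟩
  have hi' : i + 1 ∈ Icc 1 M := Finset.mem_Icc.2 ⟨by omega, hiM⟩
  have hnode : deriv (V i) (y i) < deriv (V i) (x i) := hV hpos
  have hpair : m i * ∑ j ∈ range (M + 1), m j * deriv W (y i - y j) ≤
      m i * ∑ j ∈ range (M + 1), m j * deriv W (x i - x j) := by
    refine mul_le_mul_of_nonneg_left (sum_le_sum fun j hj => ?_) (hm i hiM.le)
    have hjM : j ≤ M := Nat.lt_succ_iff.1 (mem_range.1 hj)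
    exact mul_le_mul_of_nonneg_left (hW (by linarith [hmax j hjM])) (hm j hjM)
  have hleft : deriv (Φ i) (y i - y (i - 1)) ≤ deriv (Φ i) (x i - x (i - 1)) :=
    hΦ i hi (hy.sub_mem_Ioc hi).1 (hx.sub_mem_Ioc hi).1 (by linarith [hmax (i - 1) (by omega)])
  have hright : deriv (Φ (i + 1)) (x (i + 1) - x i) ≤ deriv (Φ (i + 1)) (y (i + 1) - y i) :=
    hΦ (i + 1) hi' (hx.sub_mem_Ioc hi').1 (hy.sub_mem_Ioc hi').1
      (by rw [Nat.add_sub_cancel]; linarith [hmax (i + 1) hiM])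
  unfold chainGradient
  linarith

theorem le_of_chainGradient_le {Y0 YM : ℝ} {x y : ℕ → ℝ} (hm : ∀ j ≤ M, 0 ≤ m j)
    (hV : ∀ i, 0 < i → i < M → StrictMono (deriv (V i))) (hW : Monotone (deriv W))
    (hΦ : ∀ k ∈ Icc 1 M, MonotoneOn (deriv (Φ k)) (Set.Ioi 0))
    (hx : inQ M X0 XM x) (hy : inQ M Y0 YM y) (h0 : X0 ≤ Y0) (hM : XM ≤ YM)
    (hgrad : ∀ i, 0 < i → i < M → chainGradient M m V W Φ x i ≤ chainGradient M m V W Φ y i) :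
    ∀ i ≤ M, x i ≤ y i := by
  by_contra! ⟨j, hjM, hj⟩
  obtain ⟨i, hi, hmax⟩ := exists_max_image (range (M + 1)) (fun i => x i - y i)
    ⟨j, mem_range.2 (by omega)⟩
  replace hmax : ∀ j ≤ M, x j - y j ≤ x i - y i := fun j hj => hmax j (mem_range.2 (by omega))
  have hpos : y i < x i := by linarith [hmax j hjM]
  have hi0 : i ≠ 0 := by rintro rfl; linarith [hx.1, hy.1]
  have hiM : i ≠ M := by rintro rfl; linarith [hx.2.1, hy.2.1]
  have hi0 : 0 < i := Nat.pos_of_ne_zero hi0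
  have hiM : i < M := by have := mem_range.1 hi; omega
  exact (hgrad i hi0 hiM).not_gt
    (chainGradient_lt_of_forall_sub_le hm hi0 hiM (hV i hi0 hiM) hW hΦ hx hy hpos hmax)

theorem eq_of_chainGradient_eq_zero {x y : ℕ → ℝ} (hm : ∀ j ≤ M, 0 ≤ m j)
    (hV : ∀ i, 0 < i → i < M → StrictMono (deriv (V i))) (hW : Monotone (deriv W))
    (hΦ : ∀ k ∈ Icc 1 M, MonotoneOn (deriv (Φ k)) (Set.Ioi 0))
    (hx : inQ M X0 XM x) (hy : inQ M X0 XM y)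
    (hxgrad : ∀ i, 0 < i → i < M → chainGradient M m V W Φ x i = 0)
    (hygrad : ∀ i, 0 < i → i < M → chainGradient M m V W Φ y i = 0) :
    ∀ i ≤ M, x i = y i := fun i hi => le_antisymm
  (le_of_chainGradient_le hm hV hW hΦ hx hy le_rfl le_rfl
    (fun i hi0 hiM => (hxgrad i hi0 hiM).trans_le (hygrad i hi0 hiM).ge) i hi)
  (le_of_chainGradient_le hm hV hW hΦ hy hx le_rfl le_rfl
    (fun i hi0 hiM => (hygrad i hi0 hiM).trans_le (hxgrad i hi0 hiM).ge) i hi)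

end Chain

section Scheme

variable {M : ℕ} {h τ X0 XM : ℝ} {H f Vc Ve Wc We : ℝ → ℝ} {u0 u0half x z : ℕ → ℝ}

/-- The masses `h u₀(X_j)` of the particles, halved at the two end points as in the node inner
product. -/
def nodeMass (M : ℕ) (h : ℝ) (u0 : ℕ → ℝ) (j : ℕ) : ℝ :=
  h * u0 j * if j = 0 ∨ j = M then 1 / 2 else 1

/-- The node potentials for which the scheme is an equilibrium equation: the quadratic cost of
moving away from `x`, the implicit potential `Vc`, and the linearisation at `x` of the explicit
terms from `Ve` and `We`. -/
def nodePotential (M : ℕ) (h τ : ℝ) (f Vc Ve We : ℝ → ℝ) (u0 x : ℕ → ℝ) (i : ℕ) (t : ℝ) : ℝ :=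
  h * (cCoef M h f u0 x i / τ * ((t - x i) ^ 2 / 2) + u0 i * Vc t
    - u0 i * (deriv Ve (x i) + Shat M h (deriv We) u0 x i) * t)

lemma nodeMass_nonneg (hh : 0 ≤ h) (hu0 : ∀ i ≤ M, 0 ≤ u0 i) : ∀ j ≤ M, 0 ≤ nodeMass M h u0 j := by
  intro j hj
  have := hu0 j hj
  unfold nodeMass
  positivity

lemma Shat_eq_sum_nodeMass (hM : 0 < M) (K : ℝ → ℝ) (i : ℕ) :
    Shat M h K u0 x i = ∑ j ∈ range (M + 1), nodeMass M h u0 j * K (x i - x j) := by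
  have hinner : ∑ j ∈ Ico 1 M, nodeMass M h u0 j * K (x i - x j) =
      h * ∑ j ∈ Ioo 0 M, K (x i - x j) * u0 j := by
    rw [mul_sum]
    refine sum_congr rfl fun j hj => ?_
    obtain ⟨hj1, hjM⟩ := Finset.mem_Ico.1 hj
    rw [nodeMass, if_neg (by omega)]
    ring
  rw [sum_range_succ, sum_range_eq_add_Ico _ hM, hinner, nodeMass, nodeMass, Shat, ipE,
    if_pos (Or.inl rfl), if_pos (Or.inr rfl)]
  ring

lemma cCoef_pos (hh : 0 < h) (hf : ∀ s, 0 < s → 0 < f s) (hu0 : ∀ i ≤ M, 0 < u0 i)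
    (hx : inQ M X0 XM x) {i : ℕ} (hi0 : 0 < i) (hiM : i < M) : 0 < cCoef M h f u0 x i := by
  have hu := hu0 i hiM.le
  have hgap : x (i - 1) < x (i + 1) := (hx.2.2 i hi0 hiM.le).trans (hx.lt_succ hiM)
  have hD : 0 < DtOp M h x i := by
    rw [DtOp, if_neg hi0.ne', if_neg hiM.ne]
    exact div_pos (sub_pos.2 hgap) (by positivity)
  exact div_pos (by positivity) (mul_pos hD (hf _ (div_pos hu hD)))

lemma hasDerivAt_nodePotential (hVc : Differentiable ℝ Vc) (i : ℕ) (t : ℝ) :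
    HasDerivAt (nodePotential M h τ f Vc Ve We u0 x i)
      (h * (cCoef M h f u0 x i / τ * (t - x i) + u0 i * deriv Vc t
        - u0 i * (deriv Ve (x i) + Shat M h (deriv We) u0 x i))) t := by
  have hsq : HasDerivAt (fun t => (t - x i) ^ 2 / 2) (t - x i) t := by
    simpa using (((hasDerivAt_id' t).sub_const (x i)).fun_pow 2).div_const 2
  exact (((hsq.const_mul _).fun_add ((hVc t).hasDerivAt.const_mul _)).fun_sub
    (hasDerivAt_const_mul _)).const_mul h

lemma strictMono_deriv_nodePotential (hh : 0 < h) (hτ : 0 < τ) (hVc : Differentiable ℝ Vc)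
    (hVcmono : Monotone (deriv Vc)) {i : ℕ} (hu0 : 0 ≤ u0 i) (hc : 0 < cCoef M h f u0 x i) :
    StrictMono (deriv (nodePotential M h τ f Vc Ve We u0 x i)) := by
  intro s t hst
  rw [(hasDerivAt_nodePotential hVc i s).deriv, (hasDerivAt_nodePotential hVc i t).deriv]
  have hmove : cCoef M h f u0 x i / τ * (s - x i) < cCoef M h f u0 x i / τ * (t - x i) := by
    gcongr
  have hpot : u0 i * deriv Vc s ≤ u0 i * deriv Vc t :=
    mul_le_mul_of_nonneg_left (hVcmono hst.le) hu0
  exact mul_lt_mul_of_pos_left (by linarith) hh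

lemma Gcell_eq_neg_deriv_perspective (hh : 0 < h) (hH : DifferentiableOn ℝ H (Set.Ioi 0)) {k : ℕ}
    (hu0half : 0 < u0half k) (hgap : z (k - 1) < z k) :
    Gcell h H u0half z k = -deriv (perspective H (u0half k * h)) (z k - z (k - 1)) := by
  have hs : 0 < u0half k * h / (z k - z (k - 1)) := div_pos (mul_pos hu0half hh) (sub_pos.2 hgap)
  rw [(hasDerivAt_perspective (hH.differentiableAt (Ioi_mem_nhds hs)) (sub_pos.2 hgap).ne').deriv,
    Gcell, DhOp, div_div_eq_mul_div]
  ring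

lemma schemeUpdate_iff_chainGradient_eq_zero (hh : 0 < h)
    (hH : DifferentiableOn ℝ H (Set.Ioi 0)) (hVc : Differentiable ℝ Vc)
    (hu0half : ∀ k, 1 ≤ k → k ≤ M → 0 < u0half k) (hz : inQ M X0 XM z) :
    SchemeUpdate M h τ H f Vc Ve Wc We u0 u0half x z ↔ ∀ i, 0 < i → i < M →
      chainGradient M (nodeMass M h u0) (nodePotential M h τ f Vc Ve We u0 x) Wc
        (fun k => perspective H (u0half k * h)) z i = 0 := by
  refine forall_congr' fun i => forall_congr' fun hi0 => ?_
  rw [show i ≤ M - 1 ↔ i < M by omega]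
  refine forall_congr' fun hiM => ?_
  have hleft := Gcell_eq_neg_deriv_perspective hh hH (hu0half i hi0 hiM.le) (hz.2.2 i hi0 hiM.le)
  have hright := Gcell_eq_neg_deriv_perspective hh hH (hu0half (i + 1) (by omega) hiM)
    (hz.lt_succ hiM)
  rw [Nat.add_sub_cancel] at hright
  have hdh : h * dhOp h (Gcell h H u0half z) i =
      Gcell h H u0half z (i + 1) - Gcell h H u0half z i := mul_div_cancel₀ _ hh.ne'
  have hgrad : chainGradient M (nodeMass M h u0) (nodePotential M h τ f Vc Ve We u0 x) Wc
        (fun k => perspective H (u0half k * h)) z i =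
      h * (cCoef M h f u0 x i * (z i - x i) / τ - (-dhOp h (Gcell h H u0half z) i
        - u0 i * deriv Vc (z i) + u0 i * deriv Ve (x i) - u0 i * Shat M h (deriv Wc) u0 z i
        + u0 i * Shat M h (deriv We) u0 x i)) := by
    rw [chainGradient, (hasDerivAt_nodePotential hVc i (z i)).deriv,
      ← Shat_eq_sum_nodeMass (hi0.trans hiM.le), nodeMass, if_neg (by omega)]
    linear_combination hleft - hright - hdh
  rw [hgrad, mul_eq_zero_iff_left hh.ne', sub_eq_zero]

end Scheme

theorem scheme_uniquely_solvable_general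
    {M : ℕ} {X0 XM h τ : ℝ} (hh : 0 < h) (hτ : 0 < τ) {H f Vc Ve Wc We : ℝ → ℝ}
    (hHconv : ConvexOn ℝ (Set.Ioi 0) H) (hHdiff : DifferentiableOn ℝ H (Set.Ioi 0))
    (hf : ∀ s : ℝ, 0 < s → 0 < f s)
    (hVcconv : ConvexOn ℝ Set.univ Vc) (hVcdiff : Differentiable ℝ Vc)
    (hVediff : Differentiable ℝ Ve)
    (hWcconv : ConvexOn ℝ Set.univ Wc) (hWcdiff : Differentiable ℝ Wc)
    (hWediff : Differentiable ℝ We) (hWceven : ∀ s : ℝ, Wc (-s) = Wc s)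
    {u0 u0half : ℕ → ℝ} (hu0 : ∀ i ≤ M, 0 < u0 i)
    (hu0half : ∀ i, 1 ≤ i → i ≤ M → 0 < u0half i)
    (hHsup : Tendsto (fun s => H s / s) atTop atTop) {xn : ℕ → ℝ} (hxn : inQ M X0 XM xn) :
    ∃ xp : ℕ → ℝ,
      (inQ M X0 XM xp ∧ SchemeUpdate M h τ H f Vc Ve Wc We u0 u0half xn xp) ∧
      ∀ yp : ℕ → ℝ, inQ M X0 XM yp →
        SchemeUpdate M h τ H f Vc Ve Wc We u0 u0half xn yp →
        ∀ i ≤ M, yp i = xp i := by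
  have hmass {k : ℕ} (hk : k ∈ Icc 1 M) : 0 < u0half k * h :=
    mul_pos (hu0half k (Finset.mem_Icc.1 hk).1 (Finset.mem_Icc.1 hk).2) hh
  have hVcmono : Monotone (deriv Vc) :=
    monotoneOn_univ.1 (hVcconv.monotoneOn_deriv fun t _ => hVcdiff t)
  have hWcmono : Monotone (deriv Wc) :=
    monotoneOn_univ.1 (hWcconv.monotoneOn_deriv fun t _ => hWcdiff t)
  have hcell : ∀ k ∈ Icc 1 M, DifferentiableOn ℝ (perspective H (u0half k * h)) (Set.Ioi 0) :=
    fun k hk => differentiableOn_perspective hHdiff (hmass hk)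
  have hcellmono : ∀ k ∈ Icc 1 M,
      MonotoneOn (deriv (perspective H (u0half k * h))) (Set.Ioi 0) := fun k hk =>
    (convexOn_perspective hHconv (hmass hk)).monotoneOn_deriv fun d hd =>
      (hcell k hk).differentiableAt (Ioi_mem_nhds hd)
  have hupdate {z : ℕ → ℝ} (hz : inQ M X0 XM z) :=
    schemeUpdate_iff_chainGradient_eq_zero (τ := τ) (f := f) (Ve := Ve) (Wc := Wc) (We := We)
      (u0 := u0) (x := xn) hh hHdiff hVcdiff hu0half hz
  obtain ⟨z, hz, hgrad⟩ := exists_inQ_chainGradient_eq_zero (m := nodeMass M h u0)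
    (V := nodePotential M h τ f Vc Ve We u0 xn)
    (fun i _ t => (hasDerivAt_nodePotential hVcdiff i t).differentiableAt) hWcdiff hWceven hcell
    (fun k hk => tendsto_perspective_nhdsGT_zero hHsup (hmass hk)) hxn
  refine ⟨z, ⟨hz, (hupdate hz).2 hgrad⟩, fun y hy hyupd => ?_⟩
  exact eq_of_chainGradient_eq_zero (nodeMass_nonneg hh.le fun i hi => (hu0 i hi).le)
    (fun i hi0 hiM => strictMono_deriv_nodePotential hh hτ hVcdiff hVcmono (hu0 i hiM.le).le
      (cCoef_pos hh hf hu0 hxn hi0 hiM)) hWcmono hcellmono hy hz ((hupdate hy).1 hyupd) hgrad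

/-- **Theorem 4.1** (unique solvability of the fully discrete scheme in `Q`).
Assuming in addition that `H` is superlinear, for every `xⁿ ∈ Q` there is exactly one
`x⁺ ∈ Q` (as an element of `ℝ^{M+1}`, i.e. up to the components `0, …, M`) that is a
scheme update of `xⁿ`. -/
theorem scheme_uniquely_solvable
    (M : ℕ) (hM : 2 ≤ M) (X0 XM : ℝ) (hX : X0 < XM)
    (h : ℝ) (hh : h = (XM - X0) / (M : ℝ)) (τ : ℝ) (hτ : 0 < τ)
    (H f Vc Ve Wc We : ℝ → ℝ)
    (hHconv : ConvexOn ℝ (Set.Ioi 0) H) (hHreg : ContDiffOn ℝ 1 H (Set.Ioi 0))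
    (hf : ∀ s : ℝ, 0 < s → 0 < f s)
    (hVcconv : ConvexOn ℝ Set.univ Vc) (hVcreg : ContDiff ℝ 1 Vc)
    (hVeconv : ConvexOn ℝ Set.univ Ve) (hVereg : ContDiff ℝ 1 Ve)
    (hWcconv : ConvexOn ℝ Set.univ Wc) (hWcreg : ContDiff ℝ 1 Wc)
    (hWeconv : ConvexOn ℝ Set.univ We) (hWereg : ContDiff ℝ 1 We)
    (hWceven : ∀ s : ℝ, Wc (-s) = Wc s) (hWeeven : ∀ s : ℝ, We (-s) = We s)
    (u0 u0half : ℕ → ℝ)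
    (hu0 : ∀ i ≤ M, 0 < u0 i)
    (hu0half : ∀ i, 1 ≤ i → i ≤ M → 0 < u0half i)
    (hHsup : Tendsto (fun s => H s / s) atTop atTop)
    (xn : ℕ → ℝ) (hxn : inQ M X0 XM xn) :
    ∃ xp : ℕ → ℝ,
      (inQ M X0 XM xp ∧ SchemeUpdate M h τ H f Vc Ve Wc We u0 u0half xn xp) ∧
      ∀ yp : ℕ → ℝ, inQ M X0 XM yp →
        SchemeUpdate M h τ H f Vc Ve Wc We u0 u0half xn yp →
        ∀ i ≤ M, yp i = xp i := by
  have hh0 : 0 < h := hh ▸ div_pos (sub_pos.2 hX) (by exact_mod_cast (by omega : 0 < M))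
  exact scheme_uniquely_solvable_general hh0 hτ hHconv (hHreg.differentiableOn one_ne_zero) hf
    hVcconv (hVcreg.differentiable one_ne_zero) (hVereg.differentiable one_ne_zero) hWcconv
    (hWcreg.differentiable one_ne_zero) (hWereg.differentiable one_ne_zero) hWceven hu0 hu0half
    hHsup hxn
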